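/- Under serial dictatorship with N ≤ K and distinct utilities, every stable matching coincides with the greedy matching m*: if m is an injective map from players to arms with no blocking pair, then m(i) = m*(i) for every player i. -/

import Mathlib

/-- Under serial dictatorship all arms share the same preference over players:
every arm prefers player `i` to player `i'` whenever `i < i'` (players are
indexed by `Fin N` in order of decreasing priority).  `IsGreedy μ m` says that
`m` is the greedy matching `m*`: for each player `i` (in increasing order of
index), `m i` is an arm not taken by any higher-ranked player and it maximizes
`μ i` over the arms not taken by higher-ranked players. -/
def IsGreedy {N K : ℕ} (μ : Fin N → Fin K → ℝ) (m : Fin N → Fin K) : Prop :=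
  ∀ i : Fin N,
    (∀ j : Fin N, j < i → m j ≠ m i) ∧
    (∀ k : Fin K, (∀ j : Fin N, j < i → m j ≠ k) → μ i k ≤ μ i (m i))

/-- A pair `(i, k)` blocks the matching `m` if player `i` strictly prefers arm
`k` to its matched arm `m i`, and arm `k` is either unmatched under `m` or
matched to a player `i'` ranked lower than `i` (i.e. `i < i'`; under serial
dictatorship every arm prefers lower-indexed players). -/
def Blocks {N K : ℕ} (μ : Fin N → Fin K → ℝ) (m : Fin N → Fin K)
    (i : Fin N) (k : Fin K) : Prop :=
  μ i (m i) < μ i k ∧ ((∀ i' : Fin N, m i' ≠ k) ∨ (∃ i' : Fin N, m i' = k ∧ i < i'))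

/-- A matching is stable if no player-arm pair blocks it. -/
def IsStable {N K : ℕ} (μ : Fin N → Fin K → ℝ) (m : Fin N → Fin K) : Prop :=
  ¬ ∃ (i : Fin N) (k : Fin K), Blocks μ m i k

/-!
A stable matching is itself greedy: an arm left by the players above `i` is either unmatched or
held by `i` or by a player below `i`, so if `i` strictly preferred it to `m i`, the two would block.
A greedy matching is unique, by induction on priority: once the arms of all players above `i` are
known, so is the set of arms left to `i`, on which an injective utility has only one maximizer.
-/

section SerialDictatorship

variable {P A U : Type*}

/-- The arms left to player `i` under `m` once all players ranked above `i` have taken theirs.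
As in the finite market, `j < i` means that `j` has priority over `i`. -/
def availableArms [Preorder P] (m : P → A) (i : P) : Set A :=
  {k | ∀ j < i, m j ≠ k}

/-- Greedy (serial dictatorship) matchings for an arbitrary ordered set of players, with utilities
in an arbitrary order: every player holds a favourite among the arms left to it. The recursion of
the finite market is encoded as a condition on `m`; for `Fin N` players and real utilities it
unfolds to `IsGreedy`. -/
def IsGreedyMatching [Preorder P] [Preorder U] (u : P → A → U) (m : P → A) : Prop :=
  ∀ i, m i ∈ availableArms m i ∧ IsMaxOn (u i) (availableArms m i) (m i)

/-- Blocking pairs for an arbitrary ordered set of players, with utilities in an arbitrary order;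
for `Fin N` players and real utilities it unfolds to `Blocks`. -/
def IsBlockingPair [Preorder P] [Preorder U] (u : P → A → U) (m : P → A) (i : P) (k : A) : Prop :=
  u i (m i) < u i k ∧ ((∀ i', m i' ≠ k) ∨ ∃ i', m i' = k ∧ i < i')

/-- Stable matchings for an arbitrary ordered set of players, with utilities in an arbitrary order.
Unlike `IsStable`, the notion includes that `m` is a matching, i.e. injective. -/
structure IsStableMatching [Preorder P] [Preorder U] (u : P → A → U) (m : P → A) : Prop where
  injective : Function.Injective m
  not_exists_isBlockingPair : ¬ ∃ i k, IsBlockingPair u m i k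

theorem availableArms_congr [Preorder P] {m m' : P → A} {i : P}
    (h : Set.EqOn m m' (Set.Iio i)) : availableArms m i = availableArms m' i := by
  ext k
  exact forall₂_congr fun j hj => by rw [h hj]

theorem eq_of_isMaxOn_of_injOn [PartialOrder U] {f : A → U} {s : Set A} {a b : A}
    (hf : Set.InjOn f s) (ha : a ∈ s) (hb : b ∈ s) (hfa : IsMaxOn f s a) (hfb : IsMaxOn f s b) :
    a = b :=
  hf ha hb (le_antisymm (hfb ha) (hfa hb))

theorem IsGreedyMatching.unique [Preorder P] [WellFoundedLT P] [PartialOrder U]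
    {u : P → A → U} {m m' : P → A} (hu : ∀ i, Function.Injective (u i))
    (hm : IsGreedyMatching u m) (hm' : IsGreedyMatching u m') : m = m' := by
  funext i
  induction i using WellFoundedLT.induction with
  | ind i ih =>
    obtain ⟨hmem, hmax⟩ := hm i
    obtain ⟨hmem', hmax'⟩ := hm' i
    rw [← availableArms_congr ih] at hmem' hmax'
    exact eq_of_isMaxOn_of_injOn (hu i).injOn hmem hmem' hmax hmax'

theorem isBlockingPair_of_mem_availableArms [LinearOrder P] [Preorder U] {u : P → A → U}
    {m : P → A} {i : P} {k : A} (hk : k ∈ availableArms m i) (hlt : u i (m i) < u i k) :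
    IsBlockingPair u m i k := by
  refine ⟨hlt, or_iff_not_imp_left.mpr fun hmatched => ?_⟩
  push Not at hmatched
  obtain ⟨i', rfl⟩ := hmatched
  have hle : i ≤ i' := not_lt.mp fun h => hk i' h rfl
  have hne : i ≠ i' := by
    rintro rfl
    exact hlt.false
  exact ⟨i', rfl, hle.lt_of_ne hne⟩

theorem IsStableMatching.isGreedyMatching [LinearOrder P] [LinearOrder U] {u : P → A → U}
    {m : P → A} (hm : IsStableMatching u m) : IsGreedyMatching u m := fun i =>
  ⟨fun _ hj => hm.injective.ne hj.ne, fun k hk => not_lt.mp fun hlt =>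
    hm.not_exists_isBlockingPair ⟨i, k, isBlockingPair_of_mem_availableArms hk hlt⟩⟩

theorem stable_eq_greedy_general [LinearOrder P] [WellFoundedLT P] [LinearOrder U]
    {u : P → A → U} {m mstar : P → A} (hu : ∀ i, Function.Injective (u i))
    (hgreedy : IsGreedyMatching u mstar) (hstable : IsStableMatching u m) : m = mstar :=
  hstable.isGreedyMatching.unique hu hgreedy

end SerialDictatorship

/-- Under serial dictatorship with `N ≤ K`, positive utilities, and distinct
utilities, every stable matching coincides with the greedy matching `m*`:
if `m` is injective and no pair blocks it, then `m = m*`. -/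
theorem stable_eq_greedy
    {N K : ℕ} (hNK : N ≤ K) (μ : Fin N → Fin K → ℝ)
    (hpos : ∀ (i : Fin N) (k : Fin K), 0 < μ i k)
    (hdist : ∀ (i : Fin N) (k k' : Fin K), k ≠ k' → μ i k ≠ μ i k')
    (mstar : Fin N → Fin K) (hgreedy : IsGreedy μ mstar)
    (m : Fin N → Fin K) (hinj : Function.Injective m) (hstable : IsStable μ m) :
    ∀ i : Fin N, m i = mstar i := by
  have hu : ∀ i, Function.Injective (μ i) := fun i k k' => not_imp_not.mp (hdist i k k')
  exact congrFun (stable_eq_greedy_general hu hgreedy ⟨hinj, hstable⟩)
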